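/- arXiv:1808.07524 — 2 statements merged into one kernel-verified Lean document; each statement's English description precedes it below -/
import Mathlib

section
/- Let n ≥ 1, m ≥ 1, let D and A be n×n real matrices, let B be an n×m real matrix, and let (λ_i)_{i∈ℕ} be a strictly increasing sequence of positive real numbers tending to +∞ such that rank [λ_i·D − A | B] = n for every i. Then there exists a constant C₅ > 0 such that for every i and every vector a ∈ ℝⁿ one has ‖([λ_i·D − A | B])ᵀ a‖² ≥ C₅ · λ_i^{−2(n−1)²} · ‖a‖². -/
open Matrix

/-- The Kalman matrix `[M|B] = (M^{n-1}B | M^{n-2}B | ⋯ | MB | B)`. -/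
def kalman {n m : ℕ} (M : Matrix (Fin n) (Fin n) ℝ) (B : Matrix (Fin n) (Fin m) ℝ) :
    Matrix (Fin n) (Fin n × Fin m) ℝ :=
  fun i p => (M ^ (n - 1 - (p.1 : ℕ)) * B) i p.2

open Polynomial

lemma aux_mul_deg {ι κ μ : Type*} [Fintype κ] (P : Matrix ι κ ℝ[X]) (Q : Matrix κ μ ℝ[X])
    (p q : ℕ) (hP : ∀ i j, (P i j).natDegree ≤ p) (hQ : ∀ i j, (Q i j).natDegree ≤ q) (i : ι) (j : μ) :
    ((P * Q) i j).natDegree ≤ p + q := by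
  rw [Matrix.mul_apply]
  refine natDegree_sum_le_of_forall_le _ _ fun x _ => ?_
  exact natDegree_mul_le.trans (add_le_add (hP _ _) (hQ _ _))

lemma aux_pow_deg {n : ℕ} (P : Matrix (Fin n) (Fin n) ℝ[X])
    (hP : ∀ i j, (P i j).natDegree ≤ 1) (k : ℕ) : ∀ i j, ((P ^ k) i j).natDegree ≤ k := by
  induction k with
  | zero =>
    intro i j
    rw [pow_zero, Matrix.one_apply]
    split_ifs <;> simp
  | succ k ih =>
    intro i j
    rw [pow_succ]
    exact aux_mul_deg _ _ _ _ ih hP i j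

lemma aux_det_deg {n d : ℕ} (P : Matrix (Fin n) (Fin n) ℝ[X])
    (hP : ∀ i j, (P i j).natDegree ≤ d) : P.det.natDegree ≤ n * d := by
  rw [Matrix.det_apply]
  refine natDegree_sum_le_of_forall_le _ _ fun s _ => ?_
  refine (natDegree_smul_le _ _).trans ?_
  refine (natDegree_prod_le _ _).trans ?_
  refine (Finset.sum_le_sum fun i _ => hP _ _).trans ?_
  simp

lemma aux_adj_deg {k d : ℕ} (P : Matrix (Fin (k+1)) (Fin (k+1)) ℝ[X])
    (hP : ∀ i j, (P i j).natDegree ≤ d) (i j : Fin (k+1)) :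
    (P.adjugate i j).natDegree ≤ k * d := by
  rw [adjugate_fin_succ_eq_det_submatrix]
  refine natDegree_mul_le.trans ?_
  have h1 : ((-1 : ℝ[X]) ^ (j + i : ℕ)).natDegree = 0 := by
    rcases neg_one_pow_eq_or ℝ[X] (j + i : ℕ) with h | h <;> rw [h] <;> simp
  have h2 := aux_det_deg (d := d) (P.submatrix j.succAbove i.succAbove) (fun _ _ => hP _ _)
  omega

/-- polynomial Kalman matrix -/
noncomputable def kalPoly {n m : ℕ} (D A : Matrix (Fin n) (Fin n) ℝ) (B : Matrix (Fin n) (Fin m) ℝ) :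
    Matrix (Fin n) (Fin n × Fin m) ℝ[X] :=
  fun i p => (((X : ℝ[X]) • D.map C - A.map C) ^ (n - 1 - (p.1 : ℕ)) * B.map C) i p.2

lemma kalPoly_deg {n m : ℕ} (D A : Matrix (Fin n) (Fin n) ℝ) (B : Matrix (Fin n) (Fin m) ℝ) (i p) :
    (kalPoly D A B i p).natDegree ≤ n - 1 := by
  have h := aux_mul_deg (((X : ℝ[X]) • D.map C - A.map C) ^ (n - 1 - (p.1 : ℕ))) (B.map C)
    (n - 1 - (p.1 : ℕ)) 0 (aux_pow_deg _ ?_ _) (by simp) i p.2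
  · unfold kalPoly
    omega
  · intro i j
    simp only [Matrix.sub_apply, Matrix.smul_apply, Matrix.map_apply, smul_eq_mul]
    refine (natDegree_sub_le _ _).trans ?_
    simp only [natDegree_C, zero_le, sup_le_iff, and_true]
    exact natDegree_mul_le.trans (by simp)

lemma kalPoly_map {n m : ℕ} (D A : Matrix (Fin n) (Fin n) ℝ) (B : Matrix (Fin n) (Fin m) ℝ) (t : ℝ) :
    (kalPoly D A B).map (evalRingHom t) = kalman (t • D - A) B := by
  have h0 : ((X : ℝ[X]) • D.map C - A.map C).map (evalRingHom t) = t • D - A := by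
    ext i j
    simp
    ring
  have h1 : (B.map C).map (evalRingHom t) = B := by
    ext i j
    simp
  ext i p
  have : ((((X : ℝ[X]) • D.map C - A.map C) ^ (n - 1 - (p.1 : ℕ)) * B.map C).map (evalRingHom t)) i p.2
     = ((t • D - A) ^ (n - 1 - (p.1 : ℕ)) * B) i p.2 := by
    rw [Matrix.map_mul, Matrix.map_pow, h0, h1]
  exact this

lemma aux_cs {n : ℕ} {κ : Type*} [Fintype κ] (K : Matrix (Fin n) κ ℝ) (T : ℝ)
    (hd : (K * Kᵀ).det ≠ 0)
    (hT : ∑ x, ∑ y, |(K * Kᵀ).adjugate x y| ≤ T * |(K * Kᵀ).det|) (a : Fin n → ℝ) :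
    ∑ x, (a x) ^ 2 ≤ T * ∑ y, (Kᵀ.mulVec a y) ^ 2 := by
  set G := K * Kᵀ with hG
  set s := ∑ x, (a x) ^ 2 with hs
  have hs0 : 0 ≤ s := Finset.sum_nonneg fun _ _ => sq_nonneg _
  have hsa : a ⬝ᵥ a = s := by simp [dotProduct, hs, sq]
  set v := Kᵀ.mulVec a with hv
  set u := Kᵀ.mulVec (G.adjugateᵀ.mulVec a) with hu
  have huv : u ⬝ᵥ v = G.det * s := by
    have : u ⬝ᵥ v = a ⬝ᵥ ((G.adjugate * (K * Kᵀ)).mulVec a) := by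
      rw [hu, hv, Matrix.mulVec_mulVec, ← Matrix.vecMul_transpose, ← Matrix.dotProduct_mulVec,
        Matrix.mulVec_mulVec]
      simp [Matrix.mul_assoc]
    rw [this, ← hG, Matrix.adjugate_mul, Matrix.smul_mulVec,
      Matrix.one_mulVec, dotProduct_smul, hsa, smul_eq_mul]
  have huu : u ⬝ᵥ u = G.det * (a ⬝ᵥ G.adjugate.mulVec a) := by
    have : u ⬝ᵥ u = a ⬝ᵥ ((G.adjugate * (K * Kᵀ) * G.adjugateᵀ).mulVec a) := by
      have hu2 : u = (Kᵀ * G.adjugateᵀ).mulVec a := by rw [hu, Matrix.mulVec_mulVec]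
      have hu3 : u = a ᵥ* (Kᵀ * G.adjugateᵀ)ᵀ := by rw [hu2, Matrix.vecMul_transpose]
      calc u ⬝ᵥ u = (a ᵥ* (Kᵀ * G.adjugateᵀ)ᵀ) ⬝ᵥ ((Kᵀ * G.adjugateᵀ).mulVec a) := by
            rw [← hu3, ← hu2]
        _ = _ := by rw [← Matrix.dotProduct_mulVec, Matrix.mulVec_mulVec]
        _ = _ := by simp [Matrix.mul_assoc]
    rw [this, ← hG, Matrix.adjugate_mul, Matrix.smul_mul, Matrix.one_mul, Matrix.smul_mulVec,
      dotProduct_smul, smul_eq_mul, Matrix.mulVec_transpose, dotProduct_comm a,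
      ← Matrix.dotProduct_mulVec]
  have hquad : |a ⬝ᵥ G.adjugate.mulVec a| ≤ T * |G.det| * s := by
    have h1 : a ⬝ᵥ G.adjugate.mulVec a = ∑ x, ∑ y, a x * (G.adjugate x y * a y) := by
      simp [dotProduct, Matrix.mulVec, Finset.mul_sum]
    rw [h1]
    have hle : ∀ x, a x ^ 2 ≤ s := fun x =>
      Finset.single_le_sum (f := fun x => a x ^ 2) (fun _ _ => sq_nonneg _) (Finset.mem_univ x)
    calc _ ≤ ∑ x, ∑ y, |a x * (G.adjugate x y * a y)| :=
          (Finset.abs_sum_le_sum_abs _ _).trans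
            (Finset.sum_le_sum fun _ _ => Finset.abs_sum_le_sum_abs _ _)
      _ ≤ ∑ x, ∑ y, |G.adjugate x y| * s := by
          refine Finset.sum_le_sum fun x _ => Finset.sum_le_sum fun y _ => ?_
          have : |a x| * |a y| ≤ s := by
            nlinarith [hle x, hle y, sq_abs (a x), sq_abs (a y), sq_nonneg (|a x| - |a y|)]
          rw [abs_mul, abs_mul]
          nlinarith [abs_nonneg (G.adjugate x y), mul_le_mul_of_nonneg_left this (abs_nonneg (G.adjugate x y))]
      _ = (∑ x, ∑ y, |G.adjugate x y|) * s := by simp [Finset.sum_mul]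
      _ ≤ _ := mul_le_mul_of_nonneg_right hT hs0
  have hcs : (u ⬝ᵥ v) ^ 2 ≤ (u ⬝ᵥ u) * ∑ y, v y ^ 2 := by
    have := Finset.sum_mul_sq_le_sq_mul_sq Finset.univ u v
    simpa [dotProduct, sq] using this
  set w := ∑ y, v y ^ 2 with hw
  have hw0 : 0 ≤ w := Finset.sum_nonneg fun _ _ => sq_nonneg _
  have huu2 : u ⬝ᵥ u ≤ G.det ^ 2 * T * s := by
    rw [huu]
    refine (le_abs_self _).trans ?_
    rw [abs_mul, ← sq_abs]
    nlinarith [mul_le_mul_of_nonneg_left hquad (abs_nonneg G.det)]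
  rw [huv] at hcs
  have h3 := hcs.trans (mul_le_mul_of_nonneg_right huu2 hw0)
  have hd2 : 0 < G.det ^ 2 := by positivity
  rcases hs0.eq_or_lt with h0 | h0
  · rw [← h0]
    have hT0 : 0 ≤ T := by
      have : 0 ≤ T * |G.det| :=
        le_trans (Finset.sum_nonneg fun _ _ => Finset.sum_nonneg fun _ _ => abs_nonneg _) hT
      exact nonneg_of_mul_nonneg_left this (abs_pos.mpr hd)
    positivity
  · refine le_of_mul_le_mul_left ?_ (mul_pos hd2 h0)
    nlinarith

theorem stmt1 {n m : ℕ} (hn : 1 ≤ n) (hm : 1 ≤ m)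
    (D A : Matrix (Fin n) (Fin n) ℝ) (B : Matrix (Fin n) (Fin m) ℝ)
    (lam : ℕ → ℝ) (hpos : ∀ i, 0 < lam i) (hmono : StrictMono lam)
    (htend : Filter.Tendsto lam Filter.atTop Filter.atTop)
    (hrank : ∀ i, (kalman (lam i • D - A) B).rank = n) :
    ∃ C₅ > (0 : ℝ), ∀ i : ℕ, ∀ a : Fin n → ℝ,
      C₅ * (lam i ^ (2 * (n - 1) ^ 2))⁻¹ * ∑ x, (a x) ^ 2 ≤
        ∑ y, ((kalman (lam i • D - A) B)ᵀ.mulVec a y) ^ 2 := by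
  obtain ⟨k, rfl⟩ : ∃ k, n = k + 1 := ⟨n - 1, by omega⟩
  simp only [Nat.add_sub_cancel]
  set K := kalPoly D A B with hK
  set G := K * Kᵀ with hG
  have hKm : ∀ i, K.map (evalRingHom (lam i)) = kalman (lam i • D - A) B :=
    fun i => kalPoly_map D A B _
  have hGm : ∀ i, G.map (evalRingHom (lam i)) =
      kalman (lam i • D - A) B * (kalman (lam i • D - A) B)ᵀ := by
    intro i
    rw [hG, Matrix.map_mul, Matrix.transpose_map, hKm]
  have hdet : ∀ i, G.det.eval (lam i) =
      (kalman (lam i • D - A) B * (kalman (lam i • D - A) B)ᵀ).det := by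
    intro i
    rw [← hGm, ← coe_evalRingHom, RingHom.map_det]
    rfl
  have hadj : ∀ i x y, (G.adjugate x y).eval (lam i) =
      (kalman (lam i • D - A) B * (kalman (lam i • D - A) B)ᵀ).adjugate x y := by
    intro i x y
    rw [← hGm, ← RingHom.mapMatrix_apply, ← RingHom.map_adjugate]
    rfl
  have hd : ∀ i, (kalman (lam i • D - A) B * (kalman (lam i • D - A) B)ᵀ).det ≠ 0 := by
    intro i h
    have hr := hrank i
    rw [← Matrix.rank_self_mul_transpose] at hr
    rw [Matrix.rank] at hr
    have ht := Submodule.eq_top_of_finrank_eq (hr.trans (by simp))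
    have hs := Matrix.mulVec_surjective_iff_isUnit.mp (LinearMap.range_eq_top.mp ht)
    rw [Matrix.isUnit_iff_isUnit_det, h] at hs
    exact not_isUnit_zero hs
  have hd0 : G.det ≠ 0 := by
    intro h
    apply hd 0
    rw [← hdet, h, eval_zero]
  have hGdeg : ∀ x y, (G x y).natDegree ≤ 2 * k := by
    intro x y
    have := aux_mul_deg K Kᵀ k k (fun _ _ => kalPoly_deg D A B _ _)
      (fun _ _ => kalPoly_deg D A B _ _) x y
    rw [two_mul]
    exact this
  have hbd : ∀ x y, ∃ C > (0:ℝ), ∀ i, |(G.adjugate x y).eval (lam i)| ≤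
      C * (lam i ^ (2 * k ^ 2) * |G.det.eval (lam i)|) := by
    intro x y
    have h1 := Polynomial.isBigO_atTop_of_degree_le (G.adjugate x y) (X ^ (2 * k ^ 2) * G.det) (by
      have h3 := aux_adj_deg G hGdeg x y
      refine degree_le_natDegree.trans ?_
      rw [degree_eq_natDegree (mul_ne_zero (pow_ne_zero _ X_ne_zero) hd0),
        natDegree_mul (pow_ne_zero _ X_ne_zero) hd0, natDegree_X_pow]
      exact_mod_cast h3.trans (by nlinarith))
    have h2 := h1.comp_tendsto htend
    rw [← Nat.cofinite_eq_atTop] at h2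
    obtain ⟨C, hC, h⟩ := Asymptotics.bound_of_isBigO_cofinite h2
    refine ⟨C, hC, fun i => ?_⟩
    have hne : G.det.eval (lam i) ≠ 0 := by rw [hdet]; exact hd i
    have := @h i (by simp [hne, (hpos i).ne'])
    simpa [abs_of_pos (hpos i)] using this
  choose C hC hCb using hbd
  have hS : 0 < ∑ x, ∑ y, C x y :=
    Finset.sum_pos (fun x _ => Finset.sum_pos (fun y _ => hC x y) Finset.univ_nonempty)
      Finset.univ_nonempty
  refine ⟨(∑ x, ∑ y, C x y)⁻¹, inv_pos.mpr hS, fun i a => ?_⟩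
  have hl : 0 < lam i ^ (2 * k ^ 2) := pow_pos (hpos i) _
  have := aux_cs (kalman (lam i • D - A) B) ((∑ x, ∑ y, C x y) * lam i ^ (2 * k ^ 2)) (hd i) (by
    simp only [← hadj, ← hdet]
    rw [mul_assoc, Finset.sum_mul]
    refine Finset.sum_le_sum fun x _ => ?_
    rw [Finset.sum_mul]
    exact Finset.sum_le_sum fun y _ => hCb x y i) a
  rw [← mul_inv, inv_mul_le_iff₀ (mul_pos hS hl)]
  exact this
end

section
/- Let n ≥ 1, m ≥ 1, let D and A be n×n real matrices, let B be an n×m real matrix, and let (λ_i)_{i∈ℕ} be a strictly increasing sequence of positive real numbers tending to +∞ such that rank [λ_i·D − A | B] = n for every i. Writing K_i = [λ_i·D − A | B], there exists a constant c₁ > 0 such that det(K_i · K_iᵀ) ≥ c₁ for all i. -/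
open Matrix

theorem kalman_det_pos {n m : ℕ} (K : Matrix (Fin n) (Fin n × Fin m) ℝ) (h : K.rank = n) :
    0 < (K * Kᵀ).det := by
  have h1 : (K * Kᵀ).rank = n := by rw [Matrix.rank_self_mul_transpose, h]
  have h2 : (K * Kᵀ).PosSemidef := by
    have := Matrix.posSemidef_self_mul_conjTranspose K
    rwa [Matrix.conjTranspose_eq_transpose_of_trivial] at this
  refine lt_of_le_of_ne h2.det_nonneg (Ne.symm ?_)
  have h3 : LinearMap.range (K * Kᵀ).mulVecLin = ⊤ := by
    apply Submodule.eq_top_of_finrank_eq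
    rw [Module.finrank_fin_fun]
    exact h1
  have h4 : Function.Surjective (K * Kᵀ).mulVec := LinearMap.range_eq_top.mp h3
  rw [Matrix.mulVec_surjective_iff_isUnit, Matrix.isUnit_iff_isUnit_det] at h4
  exact h4.ne_zero

theorem kalman_det_poly {n m : ℕ} (D A : Matrix (Fin n) (Fin n) ℝ)
    (B : Matrix (Fin n) (Fin m) ℝ) : ∃ p : Polynomial ℝ, ∀ x : ℝ,
      p.eval x = (kalman (x • D - A) B * (kalman (x • D - A) B)ᵀ).det := by
  let P : Matrix (Fin n) (Fin n) (Polynomial ℝ) :=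
    (Polynomial.X : Polynomial ℝ) • D.map Polynomial.C - A.map Polynomial.C
  let Q : Matrix (Fin n) (Fin n × Fin m) (Polynomial ℝ) :=
    fun i p => (P ^ (n - 1 - (p.1 : ℕ)) * B.map Polynomial.C) i p.2
  refine ⟨(Q * Qᵀ).det, fun x => ?_⟩
  have hP : P.map (Polynomial.evalRingHom x) = x • D - A := by
    ext i j
    simp [P]
    ring
  have hB : (B.map Polynomial.C).map (Polynomial.evalRingHom x) = B := by
    ext i j
    simp
  have hQ : Q.map (Polynomial.evalRingHom x) = kalman (x • D - A) B := by
    ext i p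
    have : ((P ^ (n - 1 - (p.1 : ℕ)) * B.map Polynomial.C).map (Polynomial.evalRingHom x))
        = (x • D - A) ^ (n - 1 - (p.1 : ℕ)) * B := by
      rw [Matrix.map_mul, hB, Matrix.map_pow, hP]
    exact congrFun (congrFun this i) p.2
  rw [← Polynomial.coe_evalRingHom, RingHom.map_det, RingHom.mapMatrix_apply, Matrix.map_mul,
    Matrix.transpose_map, hQ]

theorem exists_lower_bound_of_eventually (f : ℕ → ℝ) (hf : ∀ i, 0 < f i) (N : ℕ) (c : ℝ)
    (hc : 0 < c) (h : ∀ i, N ≤ i → c ≤ f i) : ∃ c₁ > (0 : ℝ), ∀ i, c₁ ≤ f i := by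
  induction N generalizing c with
  | zero => exact ⟨c, hc, fun i => h i (Nat.zero_le i)⟩
  | succ k ih =>
    refine ih (min c (f k)) (lt_min hc (hf k)) fun i hi => ?_
    rcases Nat.eq_or_lt_of_le hi with rfl | hlt
    · exact min_le_right _ _
    · exact (min_le_left _ _).trans (h i hlt)

theorem stmt2 {n m : ℕ} (hn : 1 ≤ n) (hm : 1 ≤ m)
    (D A : Matrix (Fin n) (Fin n) ℝ) (B : Matrix (Fin n) (Fin m) ℝ)
    (lam : ℕ → ℝ) (hpos : ∀ i, 0 < lam i) (hmono : StrictMono lam)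
    (htend : Filter.Tendsto lam Filter.atTop Filter.atTop)
    (hrank : ∀ i, (kalman (lam i • D - A) B).rank = n) :
    ∃ c₁ > (0 : ℝ), ∀ i : ℕ,
      c₁ ≤ (kalman (lam i • D - A) B * (kalman (lam i • D - A) B)ᵀ).det := by
  obtain ⟨p, hp⟩ := kalman_det_poly D A B
  have hf : ∀ i, 0 < p.eval (lam i) := fun i => by
    rw [hp]
    exact kalman_det_pos _ (hrank i)
  simp only [← hp]
  by_cases hdeg : 0 < p.degree
  · have ht := ((Polynomial.abs_tendsto_atTop p hdeg).comp htend).eventually_ge_atTop 1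
    obtain ⟨N, hN⟩ := Filter.eventually_atTop.mp ht
    refine exists_lower_bound_of_eventually _ hf N 1 one_pos fun i hi => ?_
    have := hN i hi
    simpa only [Function.comp_apply, abs_of_pos (hf i)] using this
  · have hC := Polynomial.eq_C_of_degree_le_zero (not_lt.mp hdeg)
    refine ⟨p.eval (lam 0), hf 0, fun i => ?_⟩
    rw [hC]
    simp
end
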